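/- arXiv:1907.07047 — 6 statements merged into one kernel-verified Lean document; each statement's English description precedes it below -/
import Mathlib

section
/- Let S be a semiring and let L →f M →g N be S-linear maps of S-semimodules with f surjective. Then: (a) g is i-normal if and only if g∘f is i-normal; (b) if g∘f is k-normal then g is k-normal, and if g∘f is normal then g is normal; (c) if moreover f is k-normal, then g is k-normal if and only if g∘f is k-normal, and g is normal if and only if g∘f is normal. -/
open TensorProduct

section Defs

/-- An `S`-linear map `f` is *k-normal* if whenever `f m = f m'` there exist
`k, k' ∈ ker f` with `m + k = m' + k'`. -/
def KNormal {S : Type*} [Semiring S] {L M : Type*} [AddCommMonoid L] [AddCommMonoid M]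
    [Module S L] [Module S M] (f : L →ₗ[S] M) : Prop :=
  ∀ m m' : L, f m = f m' → ∃ k k' : L, f k = 0 ∧ f k' = 0 ∧ m + k = m' + k'

/-- An `S`-linear map `f` is *i-normal* if whenever `m + f l = f l'` then `m` is in the
image of `f`. -/
def INormal {S : Type*} [Semiring S] {L M : Type*} [AddCommMonoid L] [AddCommMonoid M]
    [Module S L] [Module S M] (f : L →ₗ[S] M) : Prop :=
  ∀ (m : M) (l l' : L), m + f l = f l' → ∃ x : L, f x = m

/-- An `S`-linear map is *normal* if it is both k-normal and i-normal. -/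
def IsNormalMap {S : Type*} [Semiring S] {L M : Type*} [AddCommMonoid L] [AddCommMonoid M]
    [Module S L] [Module S M] (f : L →ₗ[S] M) : Prop :=
  KNormal f ∧ INormal f

/-- A sequence `L →f M →g N` is *exact* (in the sense of Abuhlail) if `g` is k-normal and
`f(L) = ker g`. -/
def IsExactSeq {S : Type*} [Semiring S] {L M N : Type*}
    [AddCommMonoid L] [AddCommMonoid M] [AddCommMonoid N]
    [Module S L] [Module S M] [Module S N]
    (f : L →ₗ[S] M) (g : M →ₗ[S] N) : Prop :=
  KNormal g ∧ ∀ m : M, g m = 0 ↔ ∃ l : L, f l = m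

/-- A sequence `L →f M →g N` is *semi-exact* if the subtractive closure of `f(L)`
equals `ker g`. -/
def IsSemiExactSeq {S : Type*} [Semiring S] {L M N : Type*}
    [AddCommMonoid L] [AddCommMonoid M] [AddCommMonoid N]
    [Module S L] [Module S M] [Module S N]
    (f : L →ₗ[S] M) (g : M →ₗ[S] N) : Prop :=
  ∀ m : M, g m = 0 ↔ ∃ l l' : L, m + f l = f l'

/-- `0 → L →f M →g N → 0` is a *short exact sequence*: `f` is injective, `f(L) = ker g`,
and `g` is surjective and k-normal. -/
def IsShortExactSeq {S : Type*} [Semiring S] {L M N : Type*}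
    [AddCommMonoid L] [AddCommMonoid M] [AddCommMonoid N]
    [Module S L] [Module S M] [Module S N]
    (f : L →ₗ[S] M) (g : M →ₗ[S] N) : Prop :=
  Function.Injective f ∧ (∀ m : M, g m = 0 ↔ ∃ l : L, f l = m) ∧
    Function.Surjective g ∧ KNormal g

/-- A subset `T` of an additive commutative monoid is *subtractive* if
`m + l ∈ T` and `l ∈ T` imply `m ∈ T`. -/
def SubtractiveSet {M : Type*} [AddCommMonoid M] (T : Set M) : Prop :=
  ∀ m l : M, m + l ∈ T → l ∈ T → m ∈ T

/-- `F` is `M`-m-flat: for every submodule `L ≤ M`, `id_F ⊗ ι_L` is injective. -/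
def MMFlat (S : Type*) [CommSemiring S] (F M : Type*) [AddCommMonoid F] [AddCommMonoid M]
    [Module S F] [Module S M] : Prop :=
  ∀ L : Submodule S M, Function.Injective (LinearMap.lTensor F L.subtype)

/-- `F` is `M`-i-flat: for every subtractive submodule `L ≤ M`, `id_F ⊗ ι_L` is injective. -/
def MIFlat (S : Type*) [CommSemiring S] (F M : Type*) [AddCommMonoid F] [AddCommMonoid M]
    [Module S F] [Module S M] : Prop :=
  ∀ L : Submodule S M, SubtractiveSet (L : Set M) →
    Function.Injective (LinearMap.lTensor F L.subtype)

/-- `F` is `M`-e-flat (normally `M`-flat): for every subtractive submodule `L ≤ M`,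
`id_F ⊗ ι_L` is injective with subtractive image. -/
def MEFlat (S : Type*) [CommSemiring S] (F M : Type*) [AddCommMonoid F] [AddCommMonoid M]
    [Module S F] [Module S M] : Prop :=
  ∀ L : Submodule S M, SubtractiveSet (L : Set M) →
    Function.Injective (LinearMap.lTensor F L.subtype) ∧
      SubtractiveSet (Set.range (LinearMap.lTensor F L.subtype))

/-- `F` is *e-flat*: `F ⊗ -` preserves short exact sequences. -/
def EFlat (S : Type*) [CommSemiring S] (F : Type*) [AddCommMonoid F] [Module S F] : Prop :=
  ∀ (L M N : Type*) [AddCommMonoid L] [AddCommMonoid M] [AddCommMonoid N]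
    [Module S L] [Module S M] [Module S N] (f : L →ₗ[S] M) (g : M →ₗ[S] N),
    IsShortExactSeq f g →
      IsShortExactSeq (LinearMap.lTensor F f) (LinearMap.lTensor F g)

/-- `F` is *m-flat*: `F` is `M`-m-flat for every `S`-semimodule `M`. -/
def MFlatAll (S : Type*) [CommSemiring S] (F : Type*) [AddCommMonoid F] [Module S F] : Prop :=
  ∀ (M : Type*) [AddCommMonoid M] [Module S M] (L : Submodule S M),
    Function.Injective (LinearMap.lTensor F L.subtype)

/-- `A` is `S`-m-flat. -/
def SMFlat (S : Type*) [CommSemiring S] (A : Type*) [AddCommMonoid A] [Module S A] : Prop :=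
  ∀ I : Submodule S S, Function.Injective (LinearMap.lTensor A I.subtype)

/-- `A` is `S`-i-flat. -/
def SIFlat (S : Type*) [CommSemiring S] (A : Type*) [AddCommMonoid A] [Module S A] : Prop :=
  ∀ I : Submodule S S, SubtractiveSet (I : Set S) →
    Function.Injective (LinearMap.lTensor A I.subtype)

/-- `A` is `S`-e-flat. -/
def SEFlat (S : Type*) [CommSemiring S] (A : Type*) [AddCommMonoid A] [Module S A] : Prop :=
  ∀ I : Submodule S S, SubtractiveSet (I : Set S) →
    Function.Injective (LinearMap.lTensor A I.subtype) ∧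
      SubtractiveSet (Set.range (LinearMap.lTensor A I.subtype))

/-- The canonical map `θ_I : A ⊗[S] I → A`, `a ⊗ i ↦ i • a`. -/
noncomputable def thetaI (S : Type*) [CommSemiring S] (A : Type*) [AddCommMonoid A] [Module S A]
    (I : Submodule S S) : TensorProduct S A I →ₗ[S] A :=
  (TensorProduct.rid S A).toLinearMap ∘ₗ LinearMap.lTensor A I.subtype

end Defs

/- i-normality of a map only depends on its range, which a surjective `f` does not change.
For k-normality, elements of `M` lift along `f`; conversely, an equality `f l + a = f l' + a'` with
`a, a'` in the kernel of `g` lifts to `L` up to the kernel of `f`, because `f` is k-normal. -/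

section Normality

variable {S L M N : Type*} [Semiring S] [AddCommMonoid L] [AddCommMonoid M] [AddCommMonoid N]
  [Module S L] [Module S M] [Module S N] {f : L →ₗ[S] M} {g : M →ₗ[S] N}

theorem iNormal_iff_subtractiveSet_range : INormal f ↔ SubtractiveSet (Set.range f) := by
  constructor
  · rintro h m _ ⟨l', hl'⟩ ⟨l, rfl⟩
    exact h m l l' hl'.symm
  · intro h m l l' heq
    exact h m (f l) ⟨l', heq.symm⟩ ⟨l, rfl⟩

theorem iNormal_comp_iff (hf : Function.Surjective f) : INormal (g ∘ₗ f) ↔ INormal g := by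
  rw [iNormal_iff_subtractiveSet_range, iNormal_iff_subtractiveSet_range, LinearMap.coe_comp,
    hf.range_comp]

theorem KNormal.of_comp (hf : Function.Surjective f) (hgf : KNormal (g ∘ₗ f)) : KNormal g := by
  intro m m' hm
  obtain ⟨l, rfl⟩ := hf m
  obtain ⟨l', rfl⟩ := hf m'
  obtain ⟨k, k', hk, hk', heq⟩ := hgf l l' hm
  exact ⟨f k, f k', hk, hk', by rw [← map_add, heq, map_add]⟩

theorem KNormal.comp (hg : KNormal g) (hf : KNormal f)
    (hker : LinearMap.ker g ≤ LinearMap.range f) : KNormal (g ∘ₗ f) := by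
  intro l l' hl
  obtain ⟨a, a', ha, ha', hadd⟩ := hg (f l) (f l') hl
  obtain ⟨b, rfl⟩ := hker ha
  obtain ⟨b', rfl⟩ := hker ha'
  have hlift : f (l + b) = f (l' + b') := by rw [map_add, map_add, hadd]
  obtain ⟨c, c', hc, hc', heq⟩ := hf (l + b) (l' + b') hlift
  have comp_add_eq_zero {x y : L} (hx : g (f x) = 0) (hy : f y = 0) : (g ∘ₗ f) (x + y) = 0 := by
    rw [LinearMap.comp_apply, map_add, hy, add_zero, hx]
  refine ⟨b + c, b' + c', comp_add_eq_zero ha hc, comp_add_eq_zero ha' hc', ?_⟩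
  rw [← add_assoc, heq, add_assoc]

theorem KNormal.comp_iff (hkf : KNormal f) (hf : Function.Surjective f) :
    KNormal (g ∘ₗ f) ↔ KNormal g :=
  ⟨.of_comp hf, fun hg ↦ hg.comp hkf fun m _ ↦ hf m⟩

theorem IsNormalMap.of_comp (hf : Function.Surjective f) (hgf : IsNormalMap (g ∘ₗ f)) :
    IsNormalMap g :=
  ⟨hgf.1.of_comp hf, (iNormal_comp_iff hf).1 hgf.2⟩

theorem KNormal.isNormalMap_comp_iff (hkf : KNormal f) (hf : Function.Surjective f) :
    IsNormalMap (g ∘ₗ f) ↔ IsNormalMap g :=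
  and_congr (hkf.comp_iff hf) (iNormal_comp_iff hf)

end Normality

/-- behaviour of k-normality, i-normality and normality under composition
with a surjective map. -/
theorem stmt1 {S L M N : Type*} [Semiring S]
    [AddCommMonoid L] [AddCommMonoid M] [AddCommMonoid N]
    [Module S L] [Module S M] [Module S N]
    (f : L →ₗ[S] M) (g : M →ₗ[S] N) (hf : Function.Surjective f) :
    (INormal g ↔ INormal (g ∘ₗ f)) ∧
    ((KNormal (g ∘ₗ f) → KNormal g) ∧ (IsNormalMap (g ∘ₗ f) → IsNormalMap g)) ∧
    (KNormal f →
      ((KNormal g ↔ KNormal (g ∘ₗ f)) ∧ (IsNormalMap g ↔ IsNormalMap (g ∘ₗ f)))) :=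
  ⟨(iNormal_comp_iff hf).symm, ⟨KNormal.of_comp hf, IsNormalMap.of_comp hf⟩,
    fun hkf ↦ ⟨(hkf.comp_iff hf).symm, (hkf.isNormalMap_comp_iff hf).symm⟩⟩
end

section
/- Let S be a semiring and consider a commutative diagram of S-semimodules with rows A' →i A →p A'' and B' →j B →q B'' and vertical maps f : A' → B', g : A → B satisfying g∘i = j∘f, where both rows are semi-exact (the subtractive closure of the image of i equals ker p, and the subtractive closure of the image of j equals ker q) and p is a surjective k-normal map. Then there exists a unique S-linear map h : A'' → B'' with h∘p = q∘g. Moreover: (1) if in addition q is surjective and k-normal, f is surjective and g is injective (respectively bijective), then h is injective (respectively bijective); (2) if in addition A and B are additively cancellative and j, f and h are injective, then g is injective. -/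
open TensorProduct

/-! Subtraction is replaced by the following observation: if `L →i M →p N` is semi-exact and `p` is
k-normal, then `p a = p b` forces `a + i x = b + i y` for some `x` and `y`. When moreover `p` is
surjective, this makes `p` a cokernel of `i`, so `q ∘ g`, which kills the image of `i`, factors
uniquely through `p`. Both injectivity statements are diagram chases on equations of the form
`a + i x = b + i y`. -/

section SemiExact

variable {S L M N P L' M' N' : Type*} [Semiring S]
  [AddCommMonoid L] [AddCommMonoid M] [AddCommMonoid N] [AddCommMonoid P]
  [AddCommMonoid L'] [AddCommMonoid M'] [AddCommMonoid N']
  [Module S L] [Module S M] [Module S N] [Module S P]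
  [Module S L'] [Module S M'] [Module S N']
  {i : L →ₗ[S] M} {p : M →ₗ[S] N} {j : L' →ₗ[S] M'} {q : M' →ₗ[S] N'}
  {f : L →ₗ[S] L'} {g : M →ₗ[S] M'} {h : N →ₗ[S] N'}

theorem existsUnique_linearMap_comp_eq {φ : M →ₗ[S] P} (hp : Function.Surjective p)
    (hφ : Function.FactorsThrough φ p) : ∃! ψ : N →ₗ[S] P, ψ ∘ₗ p = φ := by
  have apply_surjInv (a : M) : φ (Function.surjInv hp (p a)) = φ a :=
    hφ (Function.surjInv_eq hp (p a))
  let ψ : N →ₗ[S] P :=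
    { toFun n := φ (Function.surjInv hp n)
      map_add' := hp.forall₂.2 fun a b => by
        rw [← map_add, apply_surjInv, apply_surjInv, apply_surjInv, map_add]
      map_smul' s := hp.forall.2 fun a => by
        rw [← map_smul, apply_surjInv, apply_surjInv, map_smul, RingHom.id_apply] }
  have ψ_comp : ψ ∘ₗ p = φ := LinearMap.ext apply_surjInv
  exact ⟨ψ, ψ_comp, fun _ hψ' => (LinearMap.cancel_right hp).1 (hψ'.trans ψ_comp.symm)⟩

namespace IsSemiExactSeq

theorem comp_eq_zero (hip : IsSemiExactSeq i p) : p ∘ₗ i = 0 :=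
  LinearMap.ext fun x => (hip (i x)).2 ⟨0, x, by rw [map_zero, add_zero]⟩

theorem exists_add_eq_add (hip : IsSemiExactSeq i p) (hp : KNormal p) {a b : M}
    (hab : p a = p b) : ∃ x y : L, a + i x = b + i y := by
  obtain ⟨k, l, hk, hl, hkl⟩ := hp a b hab
  obtain ⟨x, x', hx⟩ := (hip k).1 hk
  obtain ⟨y, y', hy⟩ := (hip l).1 hl
  refine ⟨x' + y, y' + x, ?_⟩
  calc a + i (x' + y) = (a + k) + (i x + i y) := by rw [map_add, ← hx]; abel
    _ = (b + l) + (i x + i y) := by rw [hkl]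
    _ = b + i (y' + x) := by rw [map_add, ← hy]; abel

theorem existsUnique_comp_eq {φ : M →ₗ[S] P} (hip : IsSemiExactSeq i p)
    (hps : Function.Surjective p) (hpk : KNormal p) (hφ : φ ∘ₗ i = 0) :
    ∃! ψ : N →ₗ[S] P, ψ ∘ₗ p = φ := by
  have φ_apply (x : L) : φ (i x) = 0 := LinearMap.congr_fun hφ x
  refine existsUnique_linearMap_comp_eq hps fun a b hab => ?_
  obtain ⟨x, y, hxy⟩ := hip.exists_add_eq_add hpk hab
  simpa only [map_add, φ_apply, add_zero] using congrArg φ hxy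

theorem injective_of_surjective_of_injective (hjq : IsSemiExactSeq j q) (hqk : KNormal q)
    (hpi : p ∘ₗ i = 0) (hps : Function.Surjective p)
    (hgi : g ∘ₗ i = j ∘ₗ f) (hhp : h ∘ₗ p = q ∘ₗ g)
    (hf : Function.Surjective f) (hg : Function.Injective g) : Function.Injective h := by
  have p_apply (x : L) : p (i x) = 0 := LinearMap.congr_fun hpi x
  have g_apply (x : L) : g (i x) = j (f x) := LinearMap.congr_fun hgi x
  have h_apply (a : M) : h (p a) = q (g a) := LinearMap.congr_fun hhp a
  refine hps.forall₂.2 fun a b hab => ?_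
  rw [h_apply, h_apply] at hab
  obtain ⟨y, y', hyy'⟩ := hjq.exists_add_eq_add hqk hab
  obtain ⟨x, rfl⟩ := hf y
  obtain ⟨x', rfl⟩ := hf y'
  have hxx' : a + i x = b + i x' := hg (by simpa only [map_add, g_apply] using hyy')
  simpa only [map_add, p_apply, add_zero] using congrArg p hxx'

theorem injective_of_injective_comp [IsCancelAdd M] [IsCancelAdd M']
    (hip : IsSemiExactSeq i p) (hpk : KNormal p) (hhp : h ∘ₗ p = q ∘ₗ g)
    (hgi : Function.Injective (g ∘ₗ i)) (hh : Function.Injective h) :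
    Function.Injective g := by
  have h_apply (a : M) : h (p a) = q (g a) := LinearMap.congr_fun hhp a
  intro a b hab
  have p_eq : p a = p b := hh (by rw [h_apply, h_apply, hab])
  obtain ⟨x, y, hxy⟩ := hip.exists_add_eq_add hpk p_eq
  have g_eq : g a + g (i x) = g a + g (i y) := by
    simpa only [map_add, ← hab] using congrArg g hxy
  obtain rfl : x = y := hgi (add_left_cancel g_eq)
  exact add_right_cancel hxy

end IsSemiExactSeq

end SemiExact

theorem isCancelAdd_of_add_left_cancel {M : Type*} [AddCommMonoid M]
    (hM : ∀ a b c : M, a + b = a + c → b = c) : IsCancelAdd M :=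
  have : IsLeftCancelAdd M := ⟨fun a _ _ => hM a _ _⟩
  AddCommMagma.IsLeftCancelAdd.toIsCancelAdd M

theorem stmt3_general {S A' A A'' B' B B'' : Type*} [Semiring S]
    [AddCommMonoid A'] [AddCommMonoid A] [AddCommMonoid A'']
    [AddCommMonoid B'] [AddCommMonoid B] [AddCommMonoid B'']
    [Module S A'] [Module S A] [Module S A'']
    [Module S B'] [Module S B] [Module S B'']
    (i : A' →ₗ[S] A) (p : A →ₗ[S] A'') (j : B' →ₗ[S] B) (q : B →ₗ[S] B'')
    (f : A' →ₗ[S] B') (g : A →ₗ[S] B)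
    (hcomm : g ∘ₗ i = j ∘ₗ f)
    (hrow1 : IsSemiExactSeq i p) (hrow2 : IsSemiExactSeq j q)
    (hps : Function.Surjective p) (hpk : KNormal p) :
    (∃! h : A'' →ₗ[S] B'', h ∘ₗ p = q ∘ₗ g) ∧
    ∀ h : A'' →ₗ[S] B'', h ∘ₗ p = q ∘ₗ g →
      (KNormal q → Function.Surjective f → Function.Injective g → Function.Injective h) ∧
      (Function.Surjective q → Function.Surjective g → Function.Surjective h) ∧
      (IsCancelAdd A → IsCancelAdd B → Function.Injective (g ∘ₗ i) → Function.Injective h →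
        Function.Injective g) := by
  have hqgi : (q ∘ₗ g) ∘ₗ i = 0 := by
    rw [LinearMap.comp_assoc, hcomm, ← LinearMap.comp_assoc, hrow2.comp_eq_zero,
      LinearMap.zero_comp]
  refine ⟨hrow1.existsUnique_comp_eq hps hpk hqgi, fun h hhp => ⟨?_, ?_, ?_⟩⟩
  · intro hqk hf hg
    exact hrow2.injective_of_surjective_of_injective hqk hrow1.comp_eq_zero hps hcomm hhp hf hg
  · intro hqs hgs
    have hhps : Function.Surjective (h ∘ p) := by
      rw [← LinearMap.coe_comp, hhp]
      exact hqs.comp hgs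
    exact hhps.of_comp
  · intro _ _ hgi hh
    exact hrow1.injective_of_injective_comp hpk hhp hgi hh

/-- the induced map on "cokernels" for a commutative diagram with
semi-exact rows, together with injectivity/bijectivity statements. -/
theorem stmt3 {S A' A A'' B' B B'' : Type*} [Semiring S]
    [AddCommMonoid A'] [AddCommMonoid A] [AddCommMonoid A'']
    [AddCommMonoid B'] [AddCommMonoid B] [AddCommMonoid B'']
    [Module S A'] [Module S A] [Module S A'']
    [Module S B'] [Module S B] [Module S B'']
    (i : A' →ₗ[S] A) (p : A →ₗ[S] A'') (j : B' →ₗ[S] B) (q : B →ₗ[S] B'')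
    (f : A' →ₗ[S] B') (g : A →ₗ[S] B)
    (hcomm : g ∘ₗ i = j ∘ₗ f)
    (hrow1 : ∀ a : A, p a = 0 ↔ ∃ x x' : A', a + i x = i x')
    (hrow2 : ∀ b : B, q b = 0 ↔ ∃ y y' : B', b + j y = j y')
    (hps : Function.Surjective p) (hpk : KNormal p) :
    (∃! h : A'' →ₗ[S] B'', h ∘ₗ p = q ∘ₗ g) ∧
    ∀ h : A'' →ₗ[S] B'', h ∘ₗ p = q ∘ₗ g →
      ((Function.Surjective q → KNormal q → Function.Surjective f →
          ((Function.Injective g → Function.Injective h) ∧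
            (Function.Bijective g → Function.Bijective h))) ∧
        ((∀ a b c : A, a + b = a + c → b = c) → (∀ a b c : B, a + b = a + c → b = c) →
          Function.Injective j → Function.Injective f → Function.Injective h →
          Function.Injective g)) := by
  obtain ⟨hex, hind⟩ := stmt3_general i p j q f g hcomm hrow1 hrow2 hps hpk
  refine ⟨hex, fun h hhp => ?_⟩
  obtain ⟨hinj, hsurj, hcancel⟩ := hind h hhp
  refine ⟨fun hqs hqk hf => ⟨hinj hqk hf, fun hg => ⟨hinj hqk hf hg.1, hsurj hqs hg.2⟩⟩, ?_⟩
  intro hA hB hj hf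
  exact hcancel (isCancelAdd_of_add_left_cancel hA) (isCancelAdd_of_add_left_cancel hB)
    (hcomm ▸ hj.comp hf)
end

section
/- Let S be a commutative semiring, M an S-semimodule, and F an S-semimodule that is M-i-flat (respectively M-e-flat, respectively M-m-flat). If F' is a retract of F, i.e. there exist S-linear maps ψ : F' → F and θ : F → F' with θ∘ψ = id_{F'}, then F' is M-i-flat (respectively M-e-flat, respectively M-m-flat). -/
open TensorProduct

/-!
Tensoring with a submodule inclusion `L ≤ M` exhibits `F' ⊗ L → F' ⊗ M` as a retract of
`F ⊗ L → F ⊗ M` in the category of arrows. Injectivity passes to retracts of arrows, and the image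
of a retract is the preimage, under the section `F' ⊗ M → F ⊗ M`, of the image of the original
arrow; preimages of subtractive sets under additive maps are subtractive.
-/

theorem SubtractiveSet.preimage {M N G : Type*} [AddCommMonoid M] [AddCommMonoid N]
    [FunLike G M N] [AddHomClass G M N] {T : Set N} (hT : SubtractiveSet T) (f : G) :
    SubtractiveSet (f ⁻¹' T) := by
  intro m l hml hl
  rw [Set.mem_preimage, map_add] at hml
  exact hT (f m) (f l) hml hl

theorem range_eq_preimage_range_of_leftInverse {α α' β β' : Type*}
    {f : α → β} {f' : α' → β'} {i : α' → α} {r : α → α'} {j : β' → β} {s : β → β'}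
    (hij : f ∘ i = j ∘ f') (hrs : f' ∘ r = s ∘ f) (hsj : Function.LeftInverse s j) :
    Set.range f' = j ⁻¹' Set.range f := by
  apply Set.Subset.antisymm
  · rintro _ ⟨x, rfl⟩
    exact ⟨i x, congrFun hij x⟩
  · rintro y ⟨x, hx⟩
    refine ⟨r x, ?_⟩
    calc
      f' (r x) = s (f x) := congrFun hrs x
      _ = s (j y) := by rw [hx]
      _ = y := hsj y

section Retract

variable {S F F' : Type*} [CommSemiring S] [AddCommMonoid F] [AddCommMonoid F']
  [Module S F] [Module S F']

theorem rTensor_leftInverse {ψ : F' →ₗ[S] F} {θ : F →ₗ[S] F'} (h : θ ∘ₗ ψ = LinearMap.id)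
    (N : Type*) [AddCommMonoid N] [Module S N] :
    Function.LeftInverse (θ.rTensor N) (ψ.rTensor N) := fun x ↦ by
  rw [← LinearMap.rTensor_comp_apply, h, LinearMap.rTensor_id_apply]

variable {L N : Type*} [AddCommMonoid L] [AddCommMonoid N] [Module S L] [Module S N]

theorem lTensor_comp_rTensor_eq_rTensor_comp_lTensor
    (φ : F' →ₗ[S] F) (g : L →ₗ[S] N) :
    g.lTensor F ∘ φ.rTensor L = φ.rTensor N ∘ g.lTensor F' := by
  rw [← LinearMap.coe_comp, ← LinearMap.coe_comp, LinearMap.lTensor_comp_rTensor,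
    LinearMap.rTensor_comp_lTensor]

theorem lTensor_injective_of_rTensor_injective
    {ψ : F' →ₗ[S] F} {g : L →ₗ[S] N} (hψ : Function.Injective (ψ.rTensor L))
    (hg : Function.Injective (g.lTensor F)) : Function.Injective (g.lTensor F') := by
  apply Function.Injective.of_comp (f := ψ.rTensor N)
  rw [← lTensor_comp_rTensor_eq_rTensor_comp_lTensor]
  exact hg.comp hψ

theorem subtractiveSet_range_lTensor_of_retract
    {ψ : F' →ₗ[S] F} {θ : F →ₗ[S] F'} (h : θ ∘ₗ ψ = LinearMap.id) {g : L →ₗ[S] N}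
    (hg : SubtractiveSet (Set.range (g.lTensor F))) :
    SubtractiveSet (Set.range (g.lTensor F')) := by
  have range_eq : Set.range (g.lTensor F') = ψ.rTensor N ⁻¹' Set.range (g.lTensor F) :=
    range_eq_preimage_range_of_leftInverse
      (lTensor_comp_rTensor_eq_rTensor_comp_lTensor ψ g)
      (lTensor_comp_rTensor_eq_rTensor_comp_lTensor θ g) (rTensor_leftInverse h N)
  rw [range_eq]
  exact hg.preimage (ψ.rTensor N)

variable {M : Type*} [AddCommMonoid M] [Module S M]

theorem MMFlat.of_rTensor_injective {ψ : F' →ₗ[S] F}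
    (hψ : ∀ L : Submodule S M, Function.Injective (ψ.rTensor L)) (hF : MMFlat S F M) :
    MMFlat S F' M :=
  fun L ↦ lTensor_injective_of_rTensor_injective (hψ L) (hF L)

theorem MIFlat.of_rTensor_injective {ψ : F' →ₗ[S] F}
    (hψ : ∀ L : Submodule S M, SubtractiveSet (L : Set M) → Function.Injective (ψ.rTensor L))
    (hF : MIFlat S F M) : MIFlat S F' M :=
  fun L hL ↦ lTensor_injective_of_rTensor_injective (hψ L hL) (hF L hL)

theorem MEFlat.of_retract {ψ : F' →ₗ[S] F} {θ : F →ₗ[S] F'} (h : θ ∘ₗ ψ = LinearMap.id)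
    (hF : MEFlat S F M) : MEFlat S F' M := fun L hL ↦
  have ⟨injective, subtractive⟩ := hF L hL
  ⟨lTensor_injective_of_rTensor_injective (rTensor_leftInverse h L).injective injective,
    subtractiveSet_range_lTensor_of_retract h subtractive⟩

end Retract

/-- retracts of `M`-i-flat (resp. `M`-e-flat, `M`-m-flat) semimodules
are `M`-i-flat (resp. `M`-e-flat, `M`-m-flat). -/
theorem stmt10 {S M F F' : Type*} [CommSemiring S]
    [AddCommMonoid M] [AddCommMonoid F] [AddCommMonoid F']
    [Module S M] [Module S F] [Module S F']
    (ψ : F' →ₗ[S] F) (θ : F →ₗ[S] F') (hret : θ ∘ₗ ψ = LinearMap.id) :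
    (MIFlat S F M → MIFlat S F' M) ∧
    (MEFlat S F M → MEFlat S F' M) ∧
    (MMFlat S F M → MMFlat S F' M) := by
  have hψ (L : Submodule S M) : Function.Injective (ψ.rTensor L) :=
    (rTensor_leftInverse hret L).injective
  exact ⟨.of_rTensor_injective fun L _ ↦ hψ L, .of_retract hret, .of_rTensor_injective hψ⟩
end

section
/- Let S be a commutative semiring and F, M S-semimodules. Then F is M-m-flat if and only if for every finitely generated submodule K ≤ M the map id_F ⊗ ι_K : F⊗K → F⊗M is injective. -/
open TensorProduct

/-!
Injectivity of `id_F ⊗ ι_L` compares two elements of `F ⊗ L` at a time, each a finite sum of pure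
tensors, so both come from `F ⊗ K` for a single finitely generated `K ≤ L`.
-/

section LTensor

variable {S F N P : Type*} [CommSemiring S] [AddCommMonoid F] [AddCommMonoid N] [AddCommMonoid P]
  [Module S F] [Module S N] [Module S P] {f : N →ₗ[S] P}

theorem lTensor_injective_of_forall_fg_comp_subtype
    (h : ∀ K : Submodule S N, K.FG → Function.Injective ((f ∘ₗ K.subtype).lTensor F)) :
    Function.Injective (f.lTensor F) := by
  intro x y hxy
  obtain ⟨K, hK, hxyK⟩ :=
    TensorProduct.exists_finite_submodule_right_of_setFinite {x, y} (Set.toFinite _)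
  obtain ⟨x, rfl⟩ := hxyK (.inl rfl)
  obtain ⟨y, rfl⟩ := hxyK (.inr rfl)
  rw [← LinearMap.lTensor_comp_apply, ← LinearMap.lTensor_comp_apply] at hxy
  rw [h K (Module.Finite.iff_fg.mp hK) hxy]

theorem lTensor_injective_iff_subtype_range (hf : Function.Injective f) :
    Function.Injective (f.lTensor F) ↔
      Function.Injective ((LinearMap.range f).subtype.lTensor F) := by
  rw [LinearMap.lTensor_inj_iff_rTensor_inj, LinearMap.lTensor_inj_iff_rTensor_inj]
  exact LinearMap.rTensor_injective_iff_subtype hf (LinearEquiv.refl S P)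

theorem lTensor_injective_of_forall_fg_le_range (hf : Function.Injective f)
    (h : ∀ K : Submodule S P, K.FG → K ≤ LinearMap.range f →
      Function.Injective (K.subtype.lTensor F)) :
    Function.Injective (f.lTensor F) := by
  refine lTensor_injective_of_forall_fg_comp_subtype fun K hK ↦ ?_
  have hinj : Function.Injective (f ∘ₗ K.subtype) := hf.comp K.injective_subtype
  have hrange : LinearMap.range (f ∘ₗ K.subtype) = K.map f := by
    rw [LinearMap.range_comp, Submodule.range_subtype]
  rw [lTensor_injective_iff_subtype_range hinj, hrange]
  exact h (K.map f) (hK.map f) LinearMap.map_le_range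

end LTensor

/-- `F` is `M`-m-flat iff `id_F ⊗ ι_K` is injective for every finitely
generated submodule `K ≤ M`. -/
theorem stmt13 {S F M : Type*} [CommSemiring S] [AddCommMonoid F] [AddCommMonoid M]
    [Module S F] [Module S M] :
    MMFlat S F M ↔
      ∀ K : Submodule S M, K.FG → Function.Injective (LinearMap.lTensor F K.subtype) := by
  refine ⟨fun hflat K _ ↦ hflat K, fun hfg L ↦ ?_⟩
  exact lTensor_injective_of_forall_fg_le_range L.injective_subtype fun K hK _ ↦ hfg K hK
end

section
/- Let S be a commutative semiring and A an S-semimodule. For an ideal I ≤ S (a submodule of S as a module over itself), let θ_I : A ⊗_S I → A be the S-linear map sending a ⊗ i to i • a; its image is the submodule I•A. Then: (1) A is S-m-flat if and only if θ_I is injective for every finitely generated ideal I of S, if and only if θ_I is injective for every ideal I of S; (2) A is S-i-flat if and only if θ_I is injective for every subtractive ideal I of S; (3) A is S-e-flat if and only if for every subtractive ideal I of S, θ_I is injective and the submodule I•A is subtractive in A. -/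
open TensorProduct

/-!
The map `θ_I` is `id_A ⊗ ι_I` followed by the isomorphism `A ⊗ S ≃ A`, so injectivity and
subtractivity of the image transfer between the two maps. Only the reduction to finitely generated
ideals needs an argument: any two elements of `A ⊗ I` come from `A ⊗ J` for some finitely
generated `J ≤ I`, so if `id_A ⊗ ι_J` separates their preimages then `id_A ⊗ ι_I` separates them.
-/

theorem subtractiveSet_preimage_iff {M N F : Type*} [AddCommMonoid M] [AddCommMonoid N]
    [FunLike F M N] [AddHomClass F M N] {f : F} (hf : Function.Surjective f) {T : Set N} :
    SubtractiveSet (f ⁻¹' T) ↔ SubtractiveSet T := by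
  simp only [SubtractiveSet, hf.forall, Set.mem_preimage, map_add]

section

variable {S A : Type*} [CommSemiring S] [AddCommMonoid A] [Module S A]

theorem lTensor_subtype_injective_of_forall_fg_le {M : Type*} [AddCommMonoid M] [Module S M]
    {L : Submodule S M}
    (h : ∀ J ≤ L, J.FG → Function.Injective (LinearMap.lTensor A J.subtype)) :
    Function.Injective (LinearMap.lTensor A L.subtype) := by
  simp only [LinearMap.lTensor_inj_iff_rTensor_inj] at h ⊢
  intro x y hxy
  obtain ⟨J, hJ, hJL, hmem⟩ :=
    Submodule.exists_fg_le_subset_range_rTensor_inclusion {x, y} (Set.toFinite _)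
  obtain ⟨x, rfl⟩ := hmem (Set.mem_insert x {y})
  obtain ⟨y, rfl⟩ := hmem (Set.mem_insert_of_mem _ rfl)
  simp only [← LinearMap.rTensor_comp_apply, Submodule.subtype_comp_inclusion] at hxy
  rw [h J hJL hJ hxy]

theorem mmFlat_iff_forall_fg {M : Type*} [AddCommMonoid M] [Module S M] :
    MMFlat S A M ↔
      ∀ L : Submodule S M, L.FG → Function.Injective (LinearMap.lTensor A L.subtype) :=
  ⟨fun h L _ => h L, fun h _ => lTensor_subtype_injective_of_forall_fg_le fun J _ => h J⟩

variable (I : Submodule S S)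

theorem thetaI_injective_iff :
    Function.Injective (thetaI S A I) ↔ Function.Injective (LinearMap.lTensor A I.subtype) :=
  (TensorProduct.rid S A).injective.of_comp_iff _

theorem range_thetaI : LinearMap.range (thetaI S A I) = I • (⊤ : Submodule S A) := by
  have rid_mk : (TensorProduct.mk S A S).compr₂ (TensorProduct.rid S A).toLinearMap =
      (LinearMap.lsmul S A).flip := by
    ext a
    simp
  rw [thetaI, LinearMap.range_comp, LinearMap.lTensor, TensorProduct.range_map,
    LinearMap.range_id, Submodule.range_subtype, Submodule.map_map₂, rid_mk,
    Submodule.map₂_flip, Submodule.smul_eq_map₂]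

theorem range_lTensor_subtype_eq_preimage_rid :
    Set.range (LinearMap.lTensor A I.subtype) =
      TensorProduct.rid S A ⁻¹' (I • (⊤ : Submodule S A) : Submodule S A) := by
  rw [← range_thetaI, thetaI, LinearMap.coe_range, LinearMap.coe_comp, Set.range_comp]
  exact (Set.preimage_image_eq _ (TensorProduct.rid S A).injective).symm

theorem subtractiveSet_range_lTensor_subtype_iff :
    SubtractiveSet (Set.range (LinearMap.lTensor A I.subtype)) ↔
      SubtractiveSet ((I • (⊤ : Submodule S A) : Submodule S A) : Set A) := by
  rw [range_lTensor_subtype_eq_preimage_rid]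
  exact subtractiveSet_preimage_iff (TensorProduct.rid S A).surjective

end

/-- characterizations of `S`-m-flat, `S`-i-flat and `S`-e-flat semimodules
via the canonical maps `θ_I : A ⊗ I → A`. -/
theorem stmt15 {S A : Type*} [CommSemiring S] [AddCommMonoid A] [Module S A] :
    (∀ I : Submodule S S, LinearMap.range (thetaI S A I) = I • (⊤ : Submodule S A)) ∧
    ((SMFlat S A ↔ ∀ I : Submodule S S, I.FG → Function.Injective (thetaI S A I)) ∧
      (SMFlat S A ↔ ∀ I : Submodule S S, Function.Injective (thetaI S A I))) ∧
    (SIFlat S A ↔ ∀ I : Submodule S S, SubtractiveSet (I : Set S) →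
        Function.Injective (thetaI S A I)) ∧
    (SEFlat S A ↔ ∀ I : Submodule S S, SubtractiveSet (I : Set S) →
        Function.Injective (thetaI S A I) ∧
          SubtractiveSet ((I • (⊤ : Submodule S A) : Submodule S A) : Set A)) := by
  simp only [thetaI_injective_iff, ← subtractiveSet_range_lTensor_subtype_iff]
  exact ⟨range_thetaI, ⟨mmFlat_iff_forall_fg, Iff.rfl⟩, Iff.rfl, Iff.rfl⟩
end

section
/- Let S be a commutative von Neumann regular semiring that is Bézout, i.e. every finitely generated ideal of S is principal. Then every normally S-generated S-semimodule A — one admitting a surjective k-normal S-linear map π : S^{(Λ)} → A from a free S-semimodule — is S-m-flat, i.e. for every ideal I ≤ S the map id_A ⊗ ι_I : A ⊗ I → A ⊗ S is injective. -/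
open TensorProduct

/-!
If `a = a * s * a` then `Sa = Se` for the idempotent `e = s * a`, and `r ↦ r * e` maps `S` onto
`Se` and fixes `Se` pointwise. So for each finitely generated ideal `J ≤ I` some linear `φ : S → I`
fixes `J`. Given two elements of `A ⊗ I` with the same image in `A ⊗ S`, take `J` such that both
come from `A ⊗ J`: then `id_A ⊗ φ` recovers them from that image.
-/

/-- A submodule `L ≤ M` is *locally split* if each finitely generated submodule of `L` is fixed
pointwise by some linear map `M → L`. This is what makes `A ⊗ L → A ⊗ M` injective for every `A`
when `R` is commutative. Over a ring it would be enough to fix single elements, but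
that reduction needs subtraction. -/
def IsLocallySplit {R M : Type*} [Semiring R] [AddCommMonoid M] [Module R M]
    (L : Submodule R M) : Prop :=
  ∀ N ≤ L, N.FG → ∃ φ : M →ₗ[R] L, ∀ x ∈ N, (φ x : M) = x

theorem IsLocallySplit.lTensor_subtype_injective {R M : Type*} [CommSemiring R]
    [AddCommMonoid M] [Module R M] (A : Type*) [AddCommMonoid A] [Module R A]
    {L : Submodule R M} (hL : IsLocallySplit L) :
    Function.Injective (L.subtype.lTensor A) := by
  intro x y hxy
  obtain ⟨N, hN, hxyN⟩ :=
    TensorProduct.exists_finite_submodule_right_of_setFinite {x, y} (Set.toFinite _)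
  obtain ⟨φ, hφ⟩ :=
    hL (N.map L.subtype) (Submodule.map_subtype_le L N) ((Module.Finite.iff_fg.mp hN).map _)
  have hφN : φ ∘ₗ L.subtype ∘ₗ N.subtype = N.subtype :=
    LinearMap.ext fun n ↦ Subtype.ext (hφ n (Submodule.mem_map_of_mem n.2))
  have recover : ∀ z ∈ ({x, y} : Set (A ⊗[R] L)), φ.lTensor A (L.subtype.lTensor A z) = z := by
    intro z hz
    obtain ⟨w, rfl⟩ := hxyN hz
    simp only [← LinearMap.lTensor_comp_apply, hφN]
  rw [← recover x (by simp), hxy, recover y (by simp)]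

section RegularBezout

variable {S : Type*} [Semiring S]

theorem exists_isIdempotentElem_span_singleton_eq {a s : S} (ha : a = a * s * a) :
    ∃ e : S, IsIdempotentElem e ∧ Ideal.span {a} = Ideal.span {e} := by
  have he : a * (s * a) = a := by rw [← mul_assoc, ← ha]
  refine ⟨s * a, ?_, le_antisymm ?_ ?_⟩
  · rw [IsIdempotentElem, mul_assoc, he]
  · exact (Ideal.span_singleton_le_iff_mem _).mpr (Ideal.mem_span_singleton'.mpr ⟨a, he⟩)
  · exact (Ideal.span_singleton_le_iff_mem _).mpr (Ideal.mem_span_singleton'.mpr ⟨s, rfl⟩)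

theorem mul_eq_self_of_mem_span_of_isIdempotentElem {e x : S} (he : IsIdempotentElem e)
    (hx : x ∈ Ideal.span {e}) : x * e = x := by
  obtain ⟨t, rfl⟩ := Ideal.mem_span_singleton'.mp hx
  rw [mul_assoc, he.eq]

theorem isLocallySplit_of_fg_eq_span_isIdempotentElem
    (hS : ∀ J : Ideal S, J.FG → ∃ e : S, IsIdempotentElem e ∧ J = Ideal.span {e}) (I : Ideal S) :
    IsLocallySplit I := by
  intro J hJI hJ
  obtain ⟨e, he, rfl⟩ := hS J hJ
  have heI : e ∈ I := hJI (Ideal.mem_span_singleton_self e)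
  exact ⟨LinearMap.toSpanSingleton S I ⟨e, heI⟩, fun x hx ↦
    mul_eq_self_of_mem_span_of_isIdempotentElem he hx⟩

theorem isLocallySplit_of_regular_of_bezout
    (hvn : ∀ a : S, ∃ s : S, a = a * s * a)
    (hbez : ∀ I : Ideal S, I.FG → ∃ a : S, I = Ideal.span {a}) (I : Ideal S) :
    IsLocallySplit I := by
  refine isLocallySplit_of_fg_eq_span_isIdempotentElem (fun J hJ ↦ ?_) I
  obtain ⟨a, rfl⟩ := hbez J hJ
  obtain ⟨s, ha⟩ := hvn a
  exact exists_isIdempotentElem_span_singleton_eq ha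

end RegularBezout

theorem stmt18_general {S : Type*} [CommSemiring S]
    (hvn : ∀ a : S, ∃ s : S, a = a * s * a)
    (hbez : ∀ I : Ideal S, I.FG → ∃ a : S, I = Ideal.span {a})
    (A : Type*) [AddCommMonoid A] [Module S A] :
    SMFlat S A :=
  fun I ↦ (isLocallySplit_of_regular_of_bezout hvn hbez I).lTensor_subtype_injective A

/-- over a Bézout von Neumann regular commutative semiring, every
normally `S`-generated semimodule is `S`-m-flat. -/
theorem stmt18 {S : Type*} [CommSemiring S]
    (hvn : ∀ a : S, ∃ s : S, a = a * s * a)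
    (hbez : ∀ I : Ideal S, I.FG → ∃ a : S, I = Ideal.span {a})
    {A : Type*} [AddCommMonoid A] [Module S A]
    (Λ : Type*) (π : (Λ →₀ S) →ₗ[S] A)
    (hπs : Function.Surjective π) (hπk : KNormal π) :
    ∀ I : Submodule S S, Function.Injective (LinearMap.lTensor A I.subtype) :=
  stmt18_general hvn hbez A
end
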